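/- arXiv:0704.1730 — 3 statements merged into one kernel-verified Lean document; each statement's English description precedes it below -/
import Mathlib

section
/- Let G be a finite group and let a, b, c be non-identity elements of G with A = ⟨a⟩, B = ⟨b⟩, C = ⟨c⟩ satisfying abc = 1 and A ∩ B = A ∩ C = B ∩ C = {1}, and suppose additionally that ⟨a, b, c⟩ = G. Then the latin bitrade (T°, T⋆), where T° = {(gA, gB, gC) : g ∈ G} and T⋆ = {(gA, gB, ga⁻¹C) : g ∈ G}, is primary. -/
/-!
Index the triples of `T°` and of `T⋆` by group elements, and for a sub-bitrade `(U, U')` let `S`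
and `S'` be the sets of indices `g` whose triples lie in `U` and in `U'`. Since the cyclic subgroups
meet trivially, two agreeing coordinates determine the index. Using `a⁻¹C = bC`, conditions (R2)
and (R3) for the three pairs of coordinates become `S = S'`, `S a = S'` and `S b⁻¹ = S'`. So `S` is
invariant under right multiplication by `a` and `b`, hence by `c = (ab)⁻¹`, hence by all of `G`;
being nonempty, it is all of `G`.
-/

section LatinDefs

variable {A₁ A₂ A₃ : Type*}

/-- A partial latin square: two triples agreeing in at least two coordinates are equal
(i.e. two distinct triples agree in at most one coordinate). -/
def IsPLS (T : Set (A₁ × A₂ × A₃)) : Prop :=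
  ∀ t ∈ T, ∀ t' ∈ T,
    ((t.1 = t'.1 ∧ t.2.1 = t'.2.1) → t = t') ∧
    ((t.1 = t'.1 ∧ t.2.2 = t'.2.2) → t = t') ∧
    ((t.2.1 = t'.2.1 ∧ t.2.2 = t'.2.2) → t = t')

/-- Conditions (R2)/(R3): for each triple of `T` and each pair of coordinates there is a
unique triple of `T'` agreeing with it in those two coordinates. -/
def BitradeCond (T T' : Set (A₁ × A₂ × A₃)) : Prop :=
  ∀ t ∈ T,
    (∃! t', t' ∈ T' ∧ t'.1 = t.1 ∧ t'.2.1 = t.2.1) ∧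
    (∃! t', t' ∈ T' ∧ t'.1 = t.1 ∧ t'.2.2 = t.2.2) ∧
    (∃! t', t' ∈ T' ∧ t'.2.1 = t.2.1 ∧ t'.2.2 = t.2.2)

/-- A latin bitrade: a pair of disjoint nonempty partial latin squares satisfying
(R1), (R2), (R3). -/
def IsBitrade (T T' : Set (A₁ × A₂ × A₃)) : Prop :=
  T.Nonempty ∧ T'.Nonempty ∧ IsPLS T ∧ IsPLS T' ∧ Disjoint T T' ∧
  BitradeCond T T' ∧ BitradeCond T' T

/-- A latin bitrade is primary if its only sub-bitrade is itself. -/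
def IsPrimary (T T' : Set (A₁ × A₂ × A₃)) : Prop :=
  ∀ U U' : Set (A₁ × A₂ × A₃), IsBitrade U U' → U ⊆ T → U' ⊆ T' → U = T ∧ U' = T'

/-- A latin trade `T` is minimal if any latin trade contained in it equals it. -/
def IsMinimalTrade (T : Set (A₁ × A₂ × A₃)) : Prop :=
  ∀ U U' : Set (A₁ × A₂ × A₃), IsBitrade U U' → U ⊆ T → U = T

/-- Thinness: if `i ∘ j = i' ∘ j'` with `i ≠ i'`, `j ≠ j'`, then `i ⋆ j'` is undefined or
equals `i ∘ j`. -/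
def IsThin (T T' : Set (A₁ × A₂ × A₃)) : Prop :=
  ∀ i i' j j' k, (i, j, k) ∈ T → (i', j', k) ∈ T → i ≠ i' → j ≠ j' →
    ∀ k', (i, j', k') ∈ T' → k' = k

/-- Orthogonality: if `i ∘ j = i' ∘ j'` with `i ≠ i'`, `j ≠ j'`, and both `i ⋆ j`,
`i' ⋆ j'` are defined, then `i ⋆ j ≠ i' ⋆ j'`. -/
def IsOrthogonal (T T' : Set (A₁ × A₂ × A₃)) : Prop :=
  ∀ i i' j j' k, (i, j, k) ∈ T → (i', j', k) ∈ T → i ≠ i' → j ≠ j' →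
    ∀ k₁ k₂, (i, j, k₁) ∈ T' → (i', j', k₂) ∈ T' → k₁ ≠ k₂

/-- `k`-homogeneity: every occurring row, column and symbol appears in exactly `k` triples. -/
def IsHomogeneous (T : Set (A₁ × A₂ × A₃)) (k : ℕ) : Prop :=
  (∀ i, (∃ t ∈ T, t.1 = i) → {t ∈ T | t.1 = i}.ncard = k) ∧
  (∀ j, (∃ t ∈ T, t.2.1 = j) → {t ∈ T | t.2.1 = j}.ncard = k) ∧
  (∀ s, (∃ t ∈ T, t.2.2 = s) → {t ∈ T | t.2.2 = s}.ncard = k)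

end LatinDefs

/-- The latin trade `T° = {(gA, gB, gC) : g ∈ G}` built from a group `G` and elements
`a`, `b`, `c`, where `A = ⟨a⟩`, `B = ⟨b⟩`, `C = ⟨c⟩` and `gH` denotes a left coset. -/
def Tcirc (G : Type*) [Group G] (a b c : G) :
    Set ((G ⧸ Subgroup.zpowers a) × (G ⧸ Subgroup.zpowers b) × (G ⧸ Subgroup.zpowers c)) :=
  {t | ∃ g : G, t = (QuotientGroup.mk g, QuotientGroup.mk g, QuotientGroup.mk g)}

/-- The disjoint mate `T⋆ = {(gA, gB, ga⁻¹C) : g ∈ G}`. -/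
def Tstar (G : Type*) [Group G] (a b c : G) :
    Set ((G ⧸ Subgroup.zpowers a) × (G ⧸ Subgroup.zpowers b) × (G ⧸ Subgroup.zpowers c)) :=
  {t | ∃ g : G, t = (QuotientGroup.mk g, QuotientGroup.mk g, QuotientGroup.mk (g * a⁻¹))}

/-- Two cosets of trivially intersecting subgroups have at most one common element. -/
lemma eq_of_mk_eq_mk {G : Type*} [Group G] {H K : Subgroup G} (hHK : H ⊓ K = ⊥) {x y : G}
    (hH : (QuotientGroup.mk x : G ⧸ H) = QuotientGroup.mk y)
    (hK : (QuotientGroup.mk x : G ⧸ K) = QuotientGroup.mk y) : x = y := by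
  rw [QuotientGroup.eq] at hH hK
  have h : x⁻¹ * y ∈ H ⊓ K := ⟨hH, hK⟩
  rw [hHK, Subgroup.mem_bot] at h
  exact inv_mul_eq_one.mp h

lemma mk_mul_mem {G : Type*} [Group G] {H : Subgroup G} (g : G) {x : G} (hx : x ∈ H) :
    (QuotientGroup.mk (g * x) : G ⧸ H) = QuotientGroup.mk g := by
  rw [QuotientGroup.eq]
  simpa using hx

/-- A set invariant under right multiplication by generators of the group is invariant under right
multiplication by every element. -/
lemma mem_iff_mul_mem_of_closure {G : Type*} [Group G] {X S : Set G}
    (hX : Subgroup.closure X = ⊤) (h : ∀ x ∈ X, ∀ g, g ∈ S ↔ g * x ∈ S) (g x : G) :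
    g ∈ S ↔ g * x ∈ S := by
  have hx : x ∈ Subgroup.closure X := hX ▸ Subgroup.mem_top x
  induction hx using Subgroup.closure_induction generalizing g with
  | mem x hx => exact h x hx g
  | one => simp
  | mul x y _ _ ihx ihy => exact (ihx g).trans (by simpa only [mul_assoc] using ihy (g * x))
  | inv x _ ih => exact (by simpa using ih (g * x⁻¹) : g * x⁻¹ ∈ S ↔ g ∈ S).symm

/-- If moreover `⟨a, b, c⟩ = G`, the latin bitrade `(T°, T⋆)` is primary. -/
theorem statement3 {G : Type*} [Group G] [Finite G] (a b c : G)
    (ha : a ≠ 1) (hb : b ≠ 1) (hc : c ≠ 1)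
    (habc : a * b * c = 1)
    (hAB : Subgroup.zpowers a ⊓ Subgroup.zpowers b = ⊥)
    (hAC : Subgroup.zpowers a ⊓ Subgroup.zpowers c = ⊥)
    (hBC : Subgroup.zpowers b ⊓ Subgroup.zpowers c = ⊥)
    (hgen : Subgroup.closure {a, b, c} = ⊤) :
    IsPrimary (Tcirc G a b c) (Tstar G a b c) := by
  intro U U' hU hUT hUT'
  obtain ⟨⟨t, ht⟩, -, -, -, -, h₁, h₂⟩ := hU
  have haA : a⁻¹ ∈ Subgroup.zpowers a := inv_mem (Subgroup.mem_zpowers a)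
  have hbB : b ∈ Subgroup.zpowers b := Subgroup.mem_zpowers b
  have hainv : a⁻¹ = b * c := inv_eq_of_mul_eq_one_right (by rw [← mul_assoc]; exact habc)
  have hbC (g : G) : (QuotientGroup.mk (g * a⁻¹) : G ⧸ Subgroup.zpowers c) =
      QuotientGroup.mk (g * b) := by
    rw [hainv, ← mul_assoc]
    exact mk_mul_mem _ (Subgroup.mem_zpowers c)
  set S : Set G := {g | ((QuotientGroup.mk g, QuotientGroup.mk g, QuotientGroup.mk g) :
    (G ⧸ Subgroup.zpowers a) × (G ⧸ Subgroup.zpowers b) × (G ⧸ Subgroup.zpowers c)) ∈ U}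
  set S' : Set G := {g | ((QuotientGroup.mk g, QuotientGroup.mk g, QuotientGroup.mk (g * a⁻¹)) :
    (G ⧸ Subgroup.zpowers a) × (G ⧸ Subgroup.zpowers b) × (G ⧸ Subgroup.zpowers c)) ∈ U'}
  have fwd (g : G) (hg : g ∈ S) : g ∈ S' ∧ g * a ∈ S' ∧ g * b⁻¹ ∈ S' := by
    obtain ⟨⟨t₁, ⟨m₁, p₁, q₁⟩, -⟩, ⟨t₂, ⟨m₂, p₂, q₂⟩, -⟩, ⟨t₃, ⟨m₃, p₃, q₃⟩, -⟩⟩ := h₁ _ hg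
    obtain ⟨x, rfl⟩ := hUT' m₁
    obtain ⟨y, rfl⟩ := hUT' m₂
    obtain ⟨z, rfl⟩ := hUT' m₃
    have ex : x = g := eq_of_mk_eq_mk hAB p₁ q₁
    have ey : y * a⁻¹ = g := eq_of_mk_eq_mk hAC ((mk_mul_mem y haA).trans p₂) q₂
    have ez : z * b = g := eq_of_mk_eq_mk hBC ((mk_mul_mem z hbB).trans p₃) ((hbC z).symm.trans q₃)
    rw [← eq_mul_inv_iff_mul_eq] at ez
    rw [mul_inv_eq_iff_eq_mul] at ey
    subst ey ez ex
    exact ⟨m₁, m₂, m₃⟩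
  have bwd (g : G) (hg : g ∈ S') : g ∈ S ∧ g * a⁻¹ ∈ S ∧ g * b ∈ S := by
    obtain ⟨⟨t₁, ⟨m₁, p₁, q₁⟩, -⟩, ⟨t₂, ⟨m₂, p₂, q₂⟩, -⟩, ⟨t₃, ⟨m₃, p₃, q₃⟩, -⟩⟩ := h₂ _ hg
    obtain ⟨x, rfl⟩ := hUT m₁
    obtain ⟨y, rfl⟩ := hUT m₂
    obtain ⟨z, rfl⟩ := hUT m₃
    have ex : x = g := eq_of_mk_eq_mk hAB p₁ q₁
    have ey : y = g * a⁻¹ := eq_of_mk_eq_mk hAC (p₂.trans (mk_mul_mem g haA).symm) q₂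
    have ez : z = g * b := eq_of_mk_eq_mk hBC (p₃.trans (mk_mul_mem g hbB).symm) (q₃.trans (hbC g))
    subst ey ez ex
    exact ⟨m₁, m₂, m₃⟩
  have inva (g : G) : g ∈ S ↔ g * a ∈ S :=
    ⟨fun h => (bwd _ (fwd g h).2.1).1,
      fun h => by simpa using (bwd _ (fwd _ h).1).2.1⟩
  have invb (g : G) : g ∈ S ↔ g * b ∈ S :=
    ⟨fun h => (bwd _ (fwd g h).1).2.2,
      fun h => by simpa using (bwd _ (fwd _ h).2.2).1⟩
  have invc (g : G) : g ∈ S ↔ g * c ∈ S := by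
    -- `g = ((g * c) * a) * b`, because `c * a * b = 1`
    have hcab : c * a * b = 1 := by
      rw [mul_assoc]
      exact mul_eq_one_comm.mp habc
    rw [inva (g * c), invb (g * c * a), mul_assoc, mul_assoc, ← mul_assoc c, hcab, mul_one]
  have hinv := mem_iff_mul_mem_of_closure (S := S) hgen (by
    rintro x (rfl | rfl | rfl)
    exacts [inva, invb, invc])
  obtain ⟨g₀, rfl⟩ := hUT ht
  have hall (g : G) : g ∈ S := by
    have h := (hinv g₀ (g₀⁻¹ * g)).mp ht
    rwa [mul_inv_cancel_left] at h
  refine ⟨hUT.antisymm ?_, hUT'.antisymm ?_⟩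
  · rintro _ ⟨g, rfl⟩
    exact hall g
  · rintro _ ⟨g, rfl⟩
    exact (fwd g (hall g)).1
end

section
/- Let G be a finite group and let a, b, c be non-identity elements of G with A = ⟨a⟩, B = ⟨b⟩, C = ⟨c⟩ satisfying abc = 1 and A ∩ B = A ∩ C = B ∩ C = {1}, and let (T°, T⋆) be the latin bitrade with T° = {(gA, gB, gC) : g ∈ G} and T⋆ = {(gA, gB, ga⁻¹C) : g ∈ G}. Then (T°, T⋆) is orthogonal if and only if C ∩ a⁻¹Ca = {1}. -/
/-- If `H ∩ K = 1`, a group element is determined by its left cosets of `H` and `K`. -/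
lemma eq_of_mk_eq_mk_s5 {G : Type*} [Group G] {H K : Subgroup G} (hHK : H ⊓ K = ⊥) {g h : G}
    (h₁ : (g : G ⧸ H) = h) (h₂ : (g : G ⧸ K) = h) : g = h := by
  have hx : g⁻¹ * h ∈ H ⊓ K := ⟨QuotientGroup.eq.1 h₁, QuotientGroup.eq.1 h₂⟩
  rw [hHK, Subgroup.mem_bot] at hx
  exact inv_mul_eq_one.1 hx

lemma mem_map_conj_inv_iff {G : Type*} [Group G] (H : Subgroup G) (a x : G) :
    x ∈ H.map (MulAut.conj a⁻¹).toMonoidHom ↔ a * x * a⁻¹ ∈ H := by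
  constructor
  · rintro ⟨y, hy, rfl⟩
    simpa [mul_assoc] using hy
  · intro hx
    exact ⟨a * x * a⁻¹, hx, by simp [mul_assoc]⟩

/-- The latin bitrade `(T°, T⋆)` constructed from `G = ⟨a, b, c⟩` is orthogonal if and
only if `C ∩ C^a = {1}`, where `C^a = a⁻¹Ca`. -/
theorem statement5 {G : Type*} [Group G] [Finite G] (a b c : G)
    (ha : a ≠ 1) (hb : b ≠ 1) (hc : c ≠ 1)
    (habc : a * b * c = 1)
    (hAB : Subgroup.zpowers a ⊓ Subgroup.zpowers b = ⊥)
    (hAC : Subgroup.zpowers a ⊓ Subgroup.zpowers c = ⊥)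
    (hBC : Subgroup.zpowers b ⊓ Subgroup.zpowers c = ⊥) :
    IsOrthogonal (Tcirc G a b c) (Tstar G a b c) ↔
      Subgroup.zpowers c ⊓ (Subgroup.zpowers c).map (MulAut.conj a⁻¹).toMonoidHom = ⊥ := by
  constructor
  · intro horth
    rw [eq_bot_iff]
    intro x hxCC
    rw [Subgroup.mem_inf, mem_map_conj_inv_iff] at hxCC
    obtain ⟨hxC, hxCa⟩ := hxCC
    rw [Subgroup.mem_bot]
    by_contra hx
    -- A nontrivial `x` gives the violating cells `(A, B)` and `(xA, xB)`.
    refine horth _ _ _ _ ((1 : G) : G ⧸ Subgroup.zpowers c) ⟨1, rfl⟩ ⟨x, ?_⟩ ?_ ?_ _ _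
      ⟨1, rfl⟩ ⟨x, rfl⟩ ?_
    · have : ((1 : G) : G ⧸ Subgroup.zpowers c) = x := QuotientGroup.eq.2 (by simpa using hxC)
      rw [this]
    · intro h
      exact hx (eq_of_mk_eq_mk_s5 hAC h (QuotientGroup.eq.2 (by simpa using hxC))).symm
    · intro h
      exact hx (eq_of_mk_eq_mk_s5 hBC h (QuotientGroup.eq.2 (by simpa using hxC))).symm
    · exact QuotientGroup.eq.2 (by simpa [mul_assoc] using hxCa)
  · rintro hbot i i' j j' k ⟨g, hg⟩ ⟨h, hh⟩ hi - k₁ k₂ ⟨g', hg'⟩ ⟨h', hh'⟩ hk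
    simp only [Prod.mk.injEq] at hg hh hg' hh'
    obtain ⟨rfl, rfl, rfl⟩ := hg
    obtain ⟨rfl, rfl, hgh⟩ := hh
    obtain ⟨hg₁, hg₂, rfl⟩ := hg'
    obtain ⟨hh₁, hh₂, rfl⟩ := hh'
    obtain rfl := eq_of_mk_eq_mk_s5 hAB hg₁ hg₂
    obtain rfl := eq_of_mk_eq_mk_s5 hAB hh₁ hh₂
    have hx : g⁻¹ * h ∈ Subgroup.zpowers c ⊓
        (Subgroup.zpowers c).map (MulAut.conj a⁻¹).toMonoidHom := by
      rw [Subgroup.mem_inf, mem_map_conj_inv_iff]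
      refine ⟨QuotientGroup.eq.1 hgh, ?_⟩
      simpa [mul_assoc] using QuotientGroup.eq.1 hk
    rw [hbot, Subgroup.mem_bot, inv_mul_eq_one] at hx
    exact hi (congrArg _ hx)
end

section
/- Let p and q be primes with p > q > 2 and q dividing p − 1, and let r be an integer with r^q ≡ 1 (mod p) and r ≢ 1 (mod p). Let G be a group of order pq generated by elements a, b where a has order p, b has order q, and b⁻¹ab = a^r. Put α = b, β = ab, γ = b⁻¹a⁻¹b⁻¹. Then αβγ = 1, the cyclic subgroups ⟨α⟩, ⟨β⟩, ⟨γ⟩ pairwise intersect trivially, ⟨α, β, γ⟩ = G, and each of α, β, γ has order q; consequently, setting A = ⟨α⟩, B = ⟨β⟩, C = ⟨γ⟩, the pair (T°, T⋆) with T° = {(gA, gB, gC) : g ∈ G} and T⋆ = {(gA, gB, gα⁻¹C) : g ∈ G} is a q-homogeneous latin bitrade of size pq. -/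
/-! ### Bitrades from three group elements with product one -/

section Bitrade

variable {G : Type*} [Group G]

theorem eq_of_mk_eq_mk_s14 {H K : Subgroup G} (h : H ⊓ K = ⊥) {x y : G}
    (h1 : (x : G ⧸ H) = y) (h2 : (x : G ⧸ K) = y) : x = y := by
  have hm : x⁻¹ * y ∈ H ⊓ K := ⟨QuotientGroup.eq.1 h1, QuotientGroup.eq.1 h2⟩
  rw [h, Subgroup.mem_bot] at hm
  exact inv_mul_eq_one.1 hm

theorem mk_mul_zpowers (g x : G) :
    ((g * x : G) : G ⧸ Subgroup.zpowers x) = g :=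
  QuotientGroup.mk_mul_of_mem g (Subgroup.mem_zpowers x)

theorem mk_mul_inv_zpowers (g x : G) :
    ((g * x⁻¹ : G) : G ⧸ Subgroup.zpowers x) = g :=
  QuotientGroup.mk_mul_of_mem g (inv_mem (Subgroup.mem_zpowers x))

/-- Since `α⁻¹ = βγ`, the symbol of the triple of `T⋆` at `g` is `gβC`. -/
theorem mk_mul_inv_eq {α β γ : G} (h : α * β * γ = 1) (g : G) :
    ((g * α⁻¹ : G) : G ⧸ Subgroup.zpowers γ) = ((g * β : G) : G ⧸ Subgroup.zpowers γ) := by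
  have : α⁻¹ = β * γ := by
    rw [inv_eq_iff_mul_eq_one, ← mul_assoc, h]
  rw [this, ← mul_assoc, mk_mul_zpowers]

variable {α β γ : G}

theorem isPLS_Tcirc
    (hAB : Subgroup.zpowers α ⊓ Subgroup.zpowers β = ⊥)
    (hAC : Subgroup.zpowers α ⊓ Subgroup.zpowers γ = ⊥)
    (hBC : Subgroup.zpowers β ⊓ Subgroup.zpowers γ = ⊥) : IsPLS (Tcirc G α β γ) := by
  rintro _ ⟨g, rfl⟩ _ ⟨h, rfl⟩
  refine ⟨fun ⟨h1, h2⟩ => ?_, fun ⟨h1, h2⟩ => ?_, fun ⟨h1, h2⟩ => ?_⟩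
  · rw [eq_of_mk_eq_mk_s14 hAB h1 h2]
  · rw [eq_of_mk_eq_mk_s14 hAC h1 h2]
  · rw [eq_of_mk_eq_mk_s14 hBC h1 h2]

theorem isPLS_Tstar (h1 : α * β * γ = 1)
    (hAB : Subgroup.zpowers α ⊓ Subgroup.zpowers β = ⊥)
    (hAC : Subgroup.zpowers α ⊓ Subgroup.zpowers γ = ⊥)
    (hBC : Subgroup.zpowers β ⊓ Subgroup.zpowers γ = ⊥) : IsPLS (Tstar G α β γ) := by
  rintro _ ⟨g, rfl⟩ _ ⟨h, rfl⟩
  refine ⟨fun ⟨e1, e2⟩ => ?_, fun ⟨e1, e2⟩ => ?_, fun ⟨e1, e2⟩ => ?_⟩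
  · rw [eq_of_mk_eq_mk_s14 hAB e1 e2]
  · have e : g * α⁻¹ = h * α⁻¹ :=
      eq_of_mk_eq_mk_s14 hAC (by simpa only [mk_mul_inv_zpowers] using e1) e2
    rw [mul_right_cancel e]
  · have e : g * β = h * β :=
      eq_of_mk_eq_mk_s14 hBC (by simpa only [mk_mul_zpowers] using e1)
        (by simpa only [mk_mul_inv_eq h1] using e2)
    rw [mul_right_cancel e]

/-- Uniqueness in the bitrade condition is automatic when the second set is a partial latin
square, so only existence has to be supplied. -/
theorem bitradeCond_of_exists {A₁ A₂ A₃ : Type*} {T T' : Set (A₁ × A₂ × A₃)} (hT' : IsPLS T')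
    (h : ∀ t ∈ T, (∃ t' ∈ T', t'.1 = t.1 ∧ t'.2.1 = t.2.1) ∧
      (∃ t' ∈ T', t'.1 = t.1 ∧ t'.2.2 = t.2.2) ∧
      (∃ t' ∈ T', t'.2.1 = t.2.1 ∧ t'.2.2 = t.2.2)) : BitradeCond T T' := by
  intro t ht
  obtain ⟨⟨u, hu, u1, u2⟩, ⟨v, hv, v1, v2⟩, ⟨w, hw, w1, w2⟩⟩ := h t ht
  refine ⟨⟨u, ⟨hu, u1, u2⟩, ?_⟩, ⟨v, ⟨hv, v1, v2⟩, ?_⟩, ⟨w, ⟨hw, w1, w2⟩, ?_⟩⟩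
  · rintro y ⟨hy, y1, y2⟩
    exact (hT' y hy u hu).1 ⟨y1.trans u1.symm, y2.trans u2.symm⟩
  · rintro y ⟨hy, y1, y2⟩
    exact (hT' y hy v hv).2.1 ⟨y1.trans v1.symm, y2.trans v2.symm⟩
  · rintro y ⟨hy, y1, y2⟩
    exact (hT' y hy w hw).2.2 ⟨y1.trans w1.symm, y2.trans w2.symm⟩

theorem isBitrade_of_mul_eq_one (h1 : α * β * γ = 1) (hα : α ≠ 1)
    (hAB : Subgroup.zpowers α ⊓ Subgroup.zpowers β = ⊥)
    (hAC : Subgroup.zpowers α ⊓ Subgroup.zpowers γ = ⊥)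
    (hBC : Subgroup.zpowers β ⊓ Subgroup.zpowers γ = ⊥) :
    IsBitrade (Tcirc G α β γ) (Tstar G α β γ) := by
  have hP := isPLS_Tcirc hAB hAC hBC
  have hP' := isPLS_Tstar h1 hAB hAC hBC
  refine ⟨⟨_, 1, rfl⟩, ⟨_, 1, rfl⟩, hP, hP', ?_, bitradeCond_of_exists hP' ?_,
    bitradeCond_of_exists hP ?_⟩
  · rw [Set.disjoint_left]
    rintro _ ⟨g, rfl⟩ ⟨h, e⟩
    simp only [Prod.mk.injEq] at e
    obtain ⟨e1, e2, e3⟩ := e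
    obtain rfl := eq_of_mk_eq_mk_s14 hAB e1 e2
    -- `gC = gα⁻¹C` together with `gA = gα⁻¹A` forces `α = 1`.
    have := eq_of_mk_eq_mk_s14 hAC (mk_mul_inv_zpowers g α).symm e3
    exact hα (by simpa using this)
  · rintro _ ⟨g, rfl⟩
    refine ⟨⟨_, ⟨g, rfl⟩, rfl, rfl⟩, ⟨_, ⟨g * α, rfl⟩, mk_mul_zpowers g α, ?_⟩,
      ⟨_, ⟨g * β⁻¹, rfl⟩, mk_mul_inv_zpowers g β, ?_⟩⟩
    · simp
    · simp only [mk_mul_inv_eq h1, inv_mul_cancel_right]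
  · rintro _ ⟨g, rfl⟩
    exact ⟨⟨_, ⟨g, rfl⟩, rfl, rfl⟩, ⟨_, ⟨g * α⁻¹, rfl⟩, mk_mul_inv_zpowers g α, rfl⟩,
      ⟨_, ⟨g * β, rfl⟩, mk_mul_zpowers g β, (mk_mul_inv_eq h1 g).symm⟩⟩

theorem ncard_mk_eq (H : Subgroup G) (g : G) :
    {x : G | (x : G ⧸ H) = g}.ncard = Nat.card H := by
  have : {x : G | (x : G ⧸ H) = g} = (fun y => g * y) '' (H : Set G) := by
    ext x
    simp only [Set.mem_ofPred_eq, Set.mem_image, SetLike.mem_coe]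
    constructor
    · intro h
      exact ⟨g⁻¹ * x, QuotientGroup.eq.1 h.symm, by simp⟩
    · rintro ⟨y, hy, rfl⟩
      exact QuotientGroup.mk_mul_of_mem g hy
  rw [this, Set.ncard_image_of_injective _ (mul_right_injective g)]
  exact Nat.card_coe_set_eq _

theorem ncard_Tcirc (hAB : Subgroup.zpowers α ⊓ Subgroup.zpowers β = ⊥) :
    (Tcirc G α β γ).ncard = Nat.card G := by
  have : Tcirc G α β γ = (fun g : G => ((g : G ⧸ Subgroup.zpowers α),
      (g : G ⧸ Subgroup.zpowers β), (g : G ⧸ Subgroup.zpowers γ))) '' Set.univ := by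
    ext t
    simp [Tcirc, eq_comm]
  rw [this, Set.ncard_image_of_injective, Set.ncard_univ]
  intro x y h
  simp only [Prod.mk.injEq] at h
  exact eq_of_mk_eq_mk_s14 hAB h.1 h.2.1

/-- The triples of `T°` on a given row (column, symbol) correspond to the elements of the
corresponding coset. -/
theorem isHomogeneous_Tcirc (q : ℕ)
    (hAB : Subgroup.zpowers α ⊓ Subgroup.zpowers β = ⊥)
    (hα : orderOf α = q) (hβ : orderOf β = q) (hγ : orderOf γ = q) :
    IsHomogeneous (Tcirc G α β γ) q := by
  set f : G → (G ⧸ Subgroup.zpowers α) × (G ⧸ Subgroup.zpowers β) × (G ⧸ Subgroup.zpowers γ) :=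
    fun g => (g, g, g) with hf
  have hinj : Function.Injective f := by
    intro x y h
    simp only [hf, Prod.mk.injEq] at h
    exact eq_of_mk_eq_mk_s14 hAB h.1 h.2.1
  have key : ∀ P : (G ⧸ Subgroup.zpowers α) × (G ⧸ Subgroup.zpowers β) ×
      (G ⧸ Subgroup.zpowers γ) → Prop,
      {t ∈ Tcirc G α β γ | P t}.ncard = {x : G | P (f x)}.ncard := by
    intro P
    have : {t ∈ Tcirc G α β γ | P t} = f '' {x : G | P (f x)} := by
      ext t
      constructor
      · rintro ⟨⟨g, rfl⟩, hP⟩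
        exact ⟨g, hP, rfl⟩
      · rintro ⟨g, hP, rfl⟩
        exact ⟨⟨g, rfl⟩, hP⟩
    rw [this, Set.ncard_image_of_injective _ hinj]
  refine ⟨?_, ?_, ?_⟩
  · rintro _ ⟨_, ⟨g, rfl⟩, rfl⟩
    rw [key, ← hα, ← Nat.card_zpowers]
    exact ncard_mk_eq _ g
  · rintro _ ⟨_, ⟨g, rfl⟩, rfl⟩
    rw [key, ← hβ, ← Nat.card_zpowers]
    exact ncard_mk_eq _ g
  · rintro _ ⟨_, ⟨g, rfl⟩, rfl⟩
    rw [key, ← hγ, ← Nat.card_zpowers]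
    exact ncard_mk_eq _ g

/-! ### Orders and intersections of cyclic subgroups -/

theorem zpowers_inf_eq_bot {q : ℕ} (hq : q.Prime) {x y : G} (hy : orderOf y = q)
    (h : y ∉ Subgroup.zpowers x) : Subgroup.zpowers x ⊓ Subgroup.zpowers y = ⊥ := by
  rw [eq_bot_iff]
  rintro z ⟨hx, k, rfl⟩
  rw [Subgroup.mem_bot]
  by_contra hne
  apply h
  have hk : ¬ (q : ℤ) ∣ k := fun hd => hne (orderOf_dvd_iff_zpow_eq_one.1 (hy ▸ hd))
  have hc : k.gcd (orderOf y) = 1 := by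
    rw [hy, Int.gcd_comm]
    exact Int.isCoprime_iff_gcd_eq_one.1
      (((Nat.prime_iff_prime_int.1 hq).coprime_iff_not_dvd).2 hk)
  exact (Subgroup.zpowers_le.2 hx) (mem_zpowers_zpow_iff.2 hc)

theorem inv_mul_zpow_mul {a c : G} {s : ℤ} (h : c⁻¹ * a * c = a ^ s) (k : ℤ) :
    c⁻¹ * a ^ k * c = a ^ (s * k) := by
  rw [zpow_mul, ← h]
  simpa using (conj_zpow (a := c⁻¹) (b := a) (i := k)).symm

/-- If `c⁻¹ac = aˢ` with `s - 1` invertible modulo the order of `a`, every element of `c⟨a⟩` is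
conjugate to `c`. -/
theorem orderOf_mul_zpow {a c : G} {s : ℤ} (h : c⁻¹ * a * c = a ^ s)
    (hs : IsCoprime (s - 1) (orderOf a : ℤ)) (m : ℤ) : orderOf (c * a ^ m) = orderOf c := by
  obtain ⟨u, v, huv⟩ := hs
  have hconj : MulAut.conj (a ^ (m * u)) c = c * a ^ m := by
    have e1 : MulAut.conj (a ^ (m * u)) c
        = c * (c⁻¹ * a ^ (m * u) * c) * (a ^ (m * u))⁻¹ := by
      rw [MulAut.conj_apply]; group
    rw [e1, inv_mul_zpow_mul h, ← zpow_neg, mul_assoc, ← zpow_add]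
    have e2 : s * (m * u) + -(m * u) = m + (orderOf a : ℤ) * (-(v * m)) := by
      linear_combination m * huv
    rw [e2, zpow_add, zpow_mul, zpow_natCast, pow_orderOf_eq_one, one_zpow, mul_one]
  rw [← hconj]
  exact MulEquiv.orderOf_eq _ c

end Bitrade

/-- For the nonabelian group of order `pq` (`p > q > 2` primes, `q ∣ p − 1`) with
`b⁻¹ab = aʳ`, the elements `α = b`, `β = ab`, `γ = b⁻¹a⁻¹b⁻¹` satisfy `αβγ = 1`,
generate `G`, have pairwise trivially intersecting cyclic subgroups, each of order `q`;
consequently `(T°, T⋆)` is a `q`-homogeneous latin bitrade of size `pq`. -/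
theorem statement14 {G : Type*} [Group G] (p q : ℕ) (hp : p.Prime) (hq : q.Prime)
    (hqp : q < p) (h2q : 2 < q) (hdvd : q ∣ p - 1)
    (r : ℤ) (hr1 : r ^ q ≡ 1 [ZMOD (p : ℤ)]) (hr2 : ¬ r ≡ 1 [ZMOD (p : ℤ)])
    (hcard : Nat.card G = p * q)
    (a b : G) (hoa : orderOf a = p) (hob : orderOf b = q)
    (hrel : b⁻¹ * a * b = a ^ r)
    (hgen : Subgroup.closure {a, b} = ⊤) :
    b * (a * b) * (b⁻¹ * a⁻¹ * b⁻¹) = 1 ∧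
    Subgroup.zpowers b ⊓ Subgroup.zpowers (a * b) = ⊥ ∧
    Subgroup.zpowers b ⊓ Subgroup.zpowers (b⁻¹ * a⁻¹ * b⁻¹) = ⊥ ∧
    Subgroup.zpowers (a * b) ⊓ Subgroup.zpowers (b⁻¹ * a⁻¹ * b⁻¹) = ⊥ ∧
    Subgroup.closure {b, a * b, b⁻¹ * a⁻¹ * b⁻¹} = ⊤ ∧
    (orderOf b = q ∧ orderOf (a * b) = q ∧ orderOf (b⁻¹ * a⁻¹ * b⁻¹) = q) ∧
    IsBitrade (Tcirc G b (a * b) (b⁻¹ * a⁻¹ * b⁻¹)) (Tstar G b (a * b) (b⁻¹ * a⁻¹ * b⁻¹)) ∧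
    IsHomogeneous (Tcirc G b (a * b) (b⁻¹ * a⁻¹ * b⁻¹)) q ∧
    (Tcirc G b (a * b) (b⁻¹ * a⁻¹ * b⁻¹)).ncard = p * q := by
  have hpZ : Prime (p : ℤ) := Nat.prime_iff_prime_int.1 hp
  have hcop : ∀ s : ℤ, ¬ s ≡ 1 [ZMOD (p : ℤ)] → IsCoprime (s - 1) (p : ℤ) := by
    intro s hs
    refine (hpZ.coprime_iff_not_dvd.2 fun hd => hs ?_).symm
    exact (Int.modEq_iff_dvd.2 hd).symm
  -- `r² ≡ 1` and `r^q ≡ 1` with `q` odd would give `r ≡ 1`.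
  have hr3 : ¬ r ^ 2 ≡ 1 [ZMOD (p : ℤ)] := by
    intro h
    obtain ⟨m, hm⟩ := hq.odd_of_ne_two h2q.ne'
    apply hr2
    have e : r ^ q ≡ r [ZMOD (p : ℤ)] := by
      rw [hm, pow_succ, pow_mul]
      simpa using (h.pow m).mul_right r
    exact e.symm.trans hr1
  have hab : a * b = b * a ^ r := by rw [← hrel]; group
  have hβ : orderOf (a * b) = q := by
    rw [hab, orderOf_mul_zpow hrel (hoa ▸ hcop r hr2), hob]
  have hγi : (b⁻¹ * a⁻¹ * b⁻¹)⁻¹ = b ^ 2 * a ^ r := by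
    rw [← hrel]; group
  have hrel2 : (b ^ 2)⁻¹ * a * b ^ 2 = a ^ (r ^ 2) := by
    have e : (b ^ 2)⁻¹ * a * b ^ 2 = b⁻¹ * (b⁻¹ * a * b) * b := by
      simp only [sq, mul_inv_rev, mul_assoc]
    rw [e, hrel, inv_mul_zpow_mul hrel, sq]
  have hγ : orderOf (b⁻¹ * a⁻¹ * b⁻¹) = q := by
    rw [← orderOf_inv, hγi, orderOf_mul_zpow hrel2 (hoa ▸ hcop _ hr3), Nat.Coprime.orderOf_pow, hob]
    rw [hob]
    exact (Nat.coprime_primes hq Nat.prime_two).2 h2q.ne'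
  have hna : ∀ x : G, orderOf x = q → a ∉ Subgroup.zpowers x := by
    intro x hx hmem
    have := orderOf_dvd_of_mem_zpowers hmem
    rw [hoa, hx] at this
    exact absurd (Nat.le_of_dvd hq.pos this) (by omega)
  have hAB : Subgroup.zpowers b ⊓ Subgroup.zpowers (a * b) = ⊥ := by
    refine zpowers_inf_eq_bot hq hβ fun h => hna b hob ?_
    exact (Subgroup.mul_mem_cancel_right _ (Subgroup.mem_zpowers b)).1 h
  have hAC : Subgroup.zpowers b ⊓ Subgroup.zpowers (b⁻¹ * a⁻¹ * b⁻¹) = ⊥ := by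
    refine zpowers_inf_eq_bot hq hγ fun h => hna b hob ?_
    have hb := inv_mem (Subgroup.mem_zpowers b)
    rwa [Subgroup.mul_mem_cancel_right _ hb, Subgroup.mul_mem_cancel_left _ hb,
      inv_mem_iff] at h
  have hBC : Subgroup.zpowers (a * b) ⊓ Subgroup.zpowers (b⁻¹ * a⁻¹ * b⁻¹) = ⊥ := by
    refine zpowers_inf_eq_bot hq hγ fun h => hna _ hβ ?_
    have hm := Subgroup.mem_zpowers (a * b)
    -- `γ = β⁻¹ b⁻¹`, so `b`, and with it `a`, lies in `⟨β⟩`.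
    have e : b⁻¹ * a⁻¹ * b⁻¹ = (a * b)⁻¹ * b⁻¹ := by group
    rw [e, Subgroup.mul_mem_cancel_left _ (inv_mem hm), inv_mem_iff] at h
    exact (Subgroup.mul_mem_cancel_right _ h).1 hm
  have h1 : b * (a * b) * (b⁻¹ * a⁻¹ * b⁻¹) = 1 := by group
  have hb1 : b ≠ 1 := by
    rintro rfl
    rw [orderOf_one] at hob
    omega
  refine ⟨h1, hAB, hAC, hBC, ?_, ⟨hob, hβ, hγ⟩, isBitrade_of_mul_eq_one h1 hb1 hAB hAC hBC,
    isHomogeneous_Tcirc q hAB hob hβ hγ, (ncard_Tcirc hAB).trans hcard⟩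
  rw [eq_top_iff, ← hgen, Subgroup.closure_le]
  have hb : b ∈ Subgroup.closure {b, a * b, b⁻¹ * a⁻¹ * b⁻¹} :=
    Subgroup.subset_closure (by simp)
  have hm : a * b ∈ Subgroup.closure {b, a * b, b⁻¹ * a⁻¹ * b⁻¹} :=
    Subgroup.subset_closure (by simp)
  rintro x (rfl | rfl)
  · exact (Subgroup.mul_mem_cancel_right _ hb).1 hm
  · exact hb
end
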